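/- Let a, b₁, b₂ ∈ ℝ, α > 0, and set c := b₁ + ab₂ − (3/4)a². Define p(ζ,μ) := (1/4)(ζ³ − 3μ²/ζ + 4b₁ζ + 4b₂μ) for ζ ∈ ℂ∖{0} and μ ∈ ℂ. Then for all ξ, η ∈ ℝ: Im p(ξ + iα, η + iaα) = (α/4)(3ξ² − α² + 3(η − aξ)²/(ξ² + α²) + 4c), and consequently Im p(ξ + iα, η + iaα) ≥ α(c − α²/4). -/

import Mathlib

/-- the symbol p(ζ,μ) = (1/4)(ζ³ − 3μ²/ζ + 4b₁ζ + 4b₂μ) of the linearized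
KP-II operator in a moving frame -/
noncomputable def psym (b₁ b₂ : ℝ) (ζ μ : ℂ) : ℂ :=
  (1/4 : ℂ) * (ζ^3 - 3*μ^2/ζ + 4*(b₁ : ℂ)*ζ + 4*(b₂ : ℂ)*μ)

/-!
The substitution `μ = aζ + ν` preserves the form of the symbol: it replaces `b₁` by
`c = b₁ + ab₂ - (3/4)a²` and `b₂` by `b₂ - (3/2)a`. Along the weighted modes `ν = η - aξ` is real,
so the term linear in `ν` has no imaginary part and the term `-3ν²/ζ` contributes `3ν² Im ζ / |ζ|²`,
which is nonnegative in the upper half-plane.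
-/

open Complex

theorem im_pow_three (ζ : ℂ) : (ζ ^ 3).im = ζ.im * (3 * ζ.re ^ 2 - ζ.im ^ 2) := by
  simp only [pow_succ, pow_zero, one_mul, mul_im, mul_re]
  ring

theorem im_ofReal_div (r : ℝ) (ζ : ℂ) : ((r : ℂ) / ζ).im = -(r * ζ.im / normSq ζ) := by
  rw [div_eq_mul_inv, im_ofReal_mul, inv_im]
  ring

theorem psym_mul_add (a b₁ b₂ : ℝ) {ζ : ℂ} (hζ : ζ ≠ 0) (ν : ℂ) :
    psym b₁ b₂ ζ (a * ζ + ν) =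
      psym (b₁ + a * b₂ - 3 / 4 * a ^ 2) (b₂ - 3 / 2 * a) ζ ν := by
  simp only [psym]
  push_cast
  field_simp
  ring

theorem im_psym_ofReal (b₁ b₂ : ℝ) (ζ : ℂ) (ν : ℝ) :
    (psym b₁ b₂ ζ ν).im =
      ζ.im / 4 * (3 * ζ.re ^ 2 - ζ.im ^ 2 + 3 * ν ^ 2 / normSq ζ + 4 * b₁) := by
  have quotient_im : (3 * (ν : ℂ) ^ 2 / ζ).im = -(3 * ν ^ 2 * ζ.im / normSq ζ) := by
    rw [← im_ofReal_div]
    push_cast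
    rfl
  have ζ_term_im : (4 * (b₁ : ℂ) * ζ).im = 4 * b₁ * ζ.im := by
    exact_mod_cast im_ofReal_mul (4 * b₁) ζ
  have ν_term_im : (4 * (b₂ : ℂ) * ν).im = 0 := by
    exact_mod_cast ofReal_im (4 * b₂ * ν)
  have quarter : (1 / 4 : ℂ) = ((1 / 4 : ℝ) : ℂ) := by norm_num
  rw [psym, quarter, im_ofReal_mul, add_im, add_im, sub_im, im_pow_three, quotient_im,
    ζ_term_im, ν_term_im]
  ring

theorem le_im_psym_ofReal (b₁ b₂ : ℝ) {ζ : ℂ} (hζ : 0 ≤ ζ.im) (ν : ℝ) :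
    ζ.im * (b₁ - ζ.im ^ 2 / 4) ≤ (psym b₁ b₂ ζ ν).im := by
  have remainder_nonneg : 0 ≤ 3 * ζ.re ^ 2 + 3 * ν ^ 2 / normSq ζ := by
    have := normSq_nonneg ζ
    positivity
  calc
    ζ.im * (b₁ - ζ.im ^ 2 / 4) = ζ.im / 4 * (4 * b₁ - ζ.im ^ 2) := by ring
    _ ≤ ζ.im / 4 * (3 * ζ.re ^ 2 - ζ.im ^ 2 + 3 * ν ^ 2 / normSq ζ + 4 * b₁) := by
      gcongr
      linarith
    _ = (psym b₁ b₂ ζ ν).im := (im_psym_ofReal b₁ b₂ ζ ν).symm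

/-- imaginary part of the symbol on exponentially weighted
Fourier modes, and its lower bound. -/
theorem symbol_imaginary_part_bound
    (a b₁ b₂ α c : ℝ) (hα : 0 < α)
    (hc : c = b₁ + a*b₂ - (3/4)*a^2) :
    ∀ ξ η : ℝ,
      (psym b₁ b₂ ((ξ : ℂ) + (α : ℂ)*Complex.I)
          ((η : ℂ) + (a*α : ℝ)*Complex.I)).im
        = (α/4)*(3*ξ^2 - α^2 + 3*(η - a*ξ)^2/(ξ^2 + α^2) + 4*c)
      ∧ α*(c - α^2/4)
        ≤ (psym b₁ b₂ ((ξ : ℂ) + (α : ℂ)*Complex.I)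
            ((η : ℂ) + (a*α : ℝ)*Complex.I)).im := by
  intro ξ η
  set ζ : ℂ := (ξ : ℂ) + (α : ℂ) * Complex.I with hζ_def
  have ζ_re : ζ.re = ξ := by simp [ζ]
  have ζ_im : ζ.im = α := by simp [ζ]
  have ζ_ne_zero : ζ ≠ 0 := fun h ↦ hα.ne' (by rw [← ζ_im, h, zero_im])
  have ζ_normSq : normSq ζ = ξ ^ 2 + α ^ 2 := normSq_add_mul_I ξ α
  have shear : (η : ℂ) + (a * α : ℝ) * Complex.I = a * ζ + ((η - a * ξ : ℝ) : ℂ) := by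
    rw [hζ_def]
    push_cast
    ring
  rw [shear, psym_mul_add a b₁ b₂ ζ_ne_zero, ← hc]
  constructor
  · rw [im_psym_ofReal, ζ_re, ζ_im, ζ_normSq]
  · rw [← ζ_im]
    exact le_im_psym_ofReal c (b₂ - 3 / 2 * a) (hα.le.trans_eq ζ_im.symm) (η - a * ξ)
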